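/- Let d ≥ 1, q > 0, T > 0, and let w: (0,T) × ℝ^d → [0,∞] be measurable. Let η ∈ C^∞([0,∞)) satisfy η(s) = 1 for s ∈ [0, 1/2], η decreasing on (1/2, 1), η(s) = 0 for s ∈ [1, ∞), and define η*(s) = 0 for s < 1/2 and η*(s) = η(s) for s ≥ 1/2. For r > 0 set ψ_r(t,x) = [η((|x|²+t)/r)]^q and ψ*_r(t,x) = [η*((|x|²+t)/r)]^q, and define y(r) = ∬_{(0,T)×ℝ^d} w(t,x) ψ*_r(t,x) dx dt and Y(R) = ∫_0^R y(r) (dr/r). Then for every R > 0, Y(R) ≤ (log 2) · ∬_{(0,T)×ℝ^d} w(t,x) ψ_R(t,x) dx dt. -/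

import Mathlib

/-!
Write `ρ = |x|² + t`, which is positive on `(0,T) × ℝ^d`. By Tonelli, `Y(R)` is the integral of
`w(t,x) · ∫₀ᴿ η*(ρ/r)^q dr/r`, so it suffices to bound the inner integral by `log 2 · η(ρ/R)^q`
(`lintegral_etaStar_le`). Its integrand vanishes unless `1/2 ≤ ρ/r < 1`, i.e. `ρ < r ≤ 2ρ`, and
there `η*(ρ/r) = η(ρ/r) ≤ η(ρ/R)` because `r < R` and `η` is antitone on `[0, ∞)`
(`antitoneOn_eta`); finally `∫_ρ^{2ρ} dr/r = log 2`.
-/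

open MeasureTheory Real Set
open scoped ENNReal

noncomputable section

/-- Euclidean space ℝ^d. -/
abbrev Ed (d : ℕ) := EuclideanSpace ℝ (Fin d)

/-- The truncated cut-off: η*(s) = 0 for s < 1/2 and η*(s) = η(s) for s ≥ 1/2. -/
def etaStar (η : ℝ → ℝ) (s : ℝ) : ℝ := if s < 1 / 2 then 0 else η s

/-- Continuity carries the monotonicity from `(1/2, 1)` to its closure; outside, `η` is constantly
`1` on the left and `0` on the right. -/
lemma antitoneOn_eta (η : ℝ → ℝ) (hc : ContinuousOn η (Ici 0))
    (hη1 : ∀ s : ℝ, 0 ≤ s → s ≤ 1 / 2 → η s = 1)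
    (hηdec : AntitoneOn η (Ioo (1 / 2 : ℝ) 1))
    (hη0 : ∀ s : ℝ, 1 ≤ s → η s = 0) : AntitoneOn η (Ici 0) := by
  have hcl : ∀ x ∈ Icc (1 / 2 : ℝ) 1, x ∈ closure (Ioo (1 / 2 : ℝ) 1) := by
    intro x hx
    rwa [closure_Ioo (by norm_num)]
  have hIcc : AntitoneOn η (Icc (1 / 2 : ℝ) 1) := by
    have hl : MonotoneOn (-η) (insert (1 / 2 : ℝ) (Ioo (1 / 2 : ℝ) 1)) := by
      refine hηdec.neg.insert_of_continuousWithinAt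
        (mem_closure_iff_clusterPt.mp (hcl _ (by norm_num)))
        ((hc.neg _ (by norm_num)).mono ?_)
      intro x hx
      exact (by norm_num : (0 : ℝ) ≤ 1 / 2).trans hx.1.le
    have hr := hl.insert_of_continuousWithinAt (x := 1)
        (mem_closure_iff_clusterPt.mp (closure_mono (subset_insert _ _) (hcl _ (by norm_num))))
        ((hc.neg _ (by norm_num)).mono (by
          rintro x (rfl | hx)
          · norm_num
          · exact (by norm_num : (0 : ℝ) ≤ 1 / 2).trans hx.1.le))
    refine AntitoneOn.mono (by simpa only [Pi.neg_apply, neg_neg] using hr.neg) ?_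
    intro x hx
    rcases hx.1.eq_or_lt with h | h
    · exact Or.inr (Or.inl h.symm)
    rcases hx.2.eq_or_lt with h' | h'
    · exact Or.inl h'
    · exact Or.inr (Or.inr ⟨h, h'⟩)
  -- On `[0, ∞)`, `η` factors through the clamping of its argument to `[1/2, 1]`.
  have hclamp : ∀ s : ℝ, 0 ≤ s → η s = η (max (1 / 2) (min s 1)) := by
    intro s hs
    rcases le_total s (1 / 2) with h | h
    · rw [min_eq_left (by linarith), max_eq_left h, hη1 s hs h, hη1 _ (by norm_num) le_rfl]
    rcases le_total s 1 with h' | h'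
    · rw [min_eq_left h', max_eq_right h]
    · rw [min_eq_right h', max_eq_right (by norm_num), hη0 s h', hη0 1 le_rfl]
  intro s hs t ht hst
  rw [hclamp s hs, hclamp t ht]
  apply hIcc
  · exact ⟨le_max_left _ _, max_le (by norm_num) (min_le_right _ _)⟩
  · exact ⟨le_max_left _ _, max_le (by norm_num) (min_le_right _ _)⟩
  · gcongr

lemma measurable_etaStar (η : ℝ → ℝ) (hc : ContinuousOn η (Ici 0)) :
    Measurable (etaStar η) := by
  have h : ContinuousOn η (Iio (1 / 2 : ℝ))ᶜ := by
    refine hc.mono ?_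
    intro x hx
    rw [compl_Iio] at hx
    exact (by norm_num : (0 : ℝ) ≤ 1 / 2).trans hx
  classical
  have := ContinuousOn.measurable_piecewise (f := fun _ : ℝ => (0 : ℝ))
    continuousOn_const h measurableSet_Iio
  convert this using 1
  ext s
  simp only [etaStar, piecewise, mem_Iio]

lemma lintegral_inv_Ioc (ρ : ℝ) (hρ : 0 < ρ) :
    ∫⁻ r in Ioc ρ (2 * ρ), (ENNReal.ofReal r)⁻¹ = ENNReal.ofReal (Real.log 2) := by
  have hle : ρ ≤ 2 * ρ := by linarith
  have hint : IntervalIntegrable (fun r : ℝ => r⁻¹) volume ρ (2 * ρ) := by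
    apply intervalIntegral.intervalIntegrable_inv
    · intro x hx
      rw [uIcc_of_le hle] at hx
      exact (hρ.trans_le hx.1).ne'
    · exact continuousOn_id
  have hval := integral_inv_of_pos hρ (by linarith : 0 < 2 * ρ)
  rw [mul_div_assoc, div_self hρ.ne', mul_one, intervalIntegral.integral_of_le hle] at hval
  rw [← hval, ofReal_integral_eq_lintegral_ofReal]
  · refine setLIntegral_congr_fun measurableSet_Ioc fun r hr => ?_
    exact (ENNReal.ofReal_inv_of_pos (hρ.trans hr.1)).symm
  · exact (intervalIntegrable_iff_integrableOn_Ioc_of_le hle).mp hint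
  · filter_upwards [ae_restrict_mem measurableSet_Ioc] with r hr
    exact inv_nonneg.mpr (hρ.trans hr.1).le

/-- The one-dimensional estimate at a fixed point with `ρ = |x|² + t`: the integrand lives on
`ρ < r ≤ 2ρ`, where it is at most `η(ρ/R)^q / r`. -/
lemma lintegral_etaStar_le (η : ℝ → ℝ) (q : ℝ) (hq : 0 < q) (hanti : AntitoneOn η (Ici 0))
    (hη0 : ∀ s : ℝ, 1 ≤ s → η s = 0) (ρ R : ℝ) (hρ : 0 < ρ) :
    ∫⁻ r in Ioo (0 : ℝ) R, ENNReal.ofReal (etaStar η (ρ / r) ^ q) / ENNReal.ofReal r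
      ≤ ENNReal.ofReal (Real.log 2) * ENNReal.ofReal (η (ρ / R) ^ q) := by
  have hpt : ∀ r ∈ Ioo (0 : ℝ) R,
      ENNReal.ofReal (etaStar η (ρ / r) ^ q) / ENNReal.ofReal r ≤
        (Ioc ρ (2 * ρ)).indicator
          (fun r => ENNReal.ofReal (η (ρ / R) ^ q) * (ENNReal.ofReal r)⁻¹) r := by
    intro r hr
    by_cases hmem : r ∈ Ioc ρ (2 * ρ)
    · rw [indicator_of_mem hmem, ENNReal.div_eq_inv_mul, mul_comm]
      have hr0 : 0 < r := hr.1
      have h1 : ¬ ρ / r < 1 / 2 := by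
        rw [not_lt, le_div_iff₀ hr0]
        linarith [hmem.2]
      have hs0 : 0 ≤ ρ / r := by positivity
      have hR0 : 0 < R := hr0.trans hr.2
      have hle : η (ρ / r) ≤ η (ρ / R) := by
        apply hanti
        · exact mem_Ici.mpr (by positivity)
        · exact hs0
        · exact div_le_div_of_nonneg_left hρ.le hr0 hr.2.le
      have hnn : 0 ≤ η (ρ / r) := by
        rw [← hη0 (max 1 (ρ / r)) (le_max_left _ _)]
        exact hanti hs0 (mem_Ici.mpr (hs0.trans (le_max_right _ _))) (le_max_right _ _)
      rw [etaStar, if_neg h1]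
      gcongr
    · rw [indicator_of_notMem hmem]
      have hz : etaStar η (ρ / r) = 0 := by
        unfold etaStar
        split_ifs with h
        · rfl
        · apply hη0
          rw [not_lt, le_div_iff₀ hr.1] at h
          rw [le_div_iff₀ hr.1, one_mul]
          by_contra hlt
          exact hmem ⟨not_le.mp hlt, by linarith⟩
      rw [hz, Real.zero_rpow hq.ne']
      simp
  calc _ ≤ ∫⁻ r in Ioo (0 : ℝ) R, (Ioc ρ (2 * ρ)).indicator
          (fun r => ENNReal.ofReal (η (ρ / R) ^ q) * (ENNReal.ofReal r)⁻¹) r :=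
        setLIntegral_mono' measurableSet_Ioo hpt
    _ ≤ ∫⁻ r, (Ioc ρ (2 * ρ)).indicator
          (fun r => ENNReal.ofReal (η (ρ / R) ^ q) * (ENNReal.ofReal r)⁻¹) r :=
        setLIntegral_le_lintegral _ _
    _ = _ := by
        rw [lintegral_indicator measurableSet_Ioc,
          lintegral_const_mul' _ _ ENNReal.ofReal_ne_top, lintegral_inv_Ioc ρ hρ, mul_comm]

theorem Y_le_log_two_mul_I₀
    (d : ℕ) (hd : 1 ≤ d) (q : ℝ) (hq : 0 < q) (T : ℝ) (hT : 0 < T)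
    (w : ℝ × Ed d → ℝ≥0∞) (hw : Measurable w)
    (η : ℝ → ℝ)
    (hηsmooth : ContDiffOn ℝ (⊤ : ℕ∞) η (Ici 0))
    (hη1 : ∀ s : ℝ, 0 ≤ s → s ≤ 1 / 2 → η s = 1)
    (hηdec : AntitoneOn η (Ioo (1 / 2 : ℝ) 1))
    (hη0 : ∀ s : ℝ, 1 ≤ s → η s = 0)
    (y : ℝ → ℝ≥0∞)
    (hy : ∀ r : ℝ, y r = ∫⁻ p in Ioo 0 T ×ˢ (univ : Set (Ed d)),
      w p * ENNReal.ofReal (etaStar η ((‖p.2‖ ^ 2 + p.1) / r) ^ q))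
    (Y : ℝ → ℝ≥0∞)
    (hY : ∀ R : ℝ, Y R = ∫⁻ r in Ioo (0 : ℝ) R, y r / ENNReal.ofReal r) :
    ∀ R : ℝ, 0 < R →
      Y R ≤ ENNReal.ofReal (Real.log 2) *
        ∫⁻ p in Ioo 0 T ×ˢ (univ : Set (Ed d)),
          w p * ENNReal.ofReal (η ((‖p.2‖ ^ 2 + p.1) / R) ^ q) := by
  intro R _
  have hc : ContinuousOn η (Ici 0) := hηsmooth.continuousOn
  have hanti := antitoneOn_eta η hc hη1 hηdec hη0
  have hmeas := measurable_etaStar η hc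
  -- Joint measurability of the integrand, required by Tonelli.
  have hF : Measurable (fun z : ℝ × (ℝ × Ed d) =>
      w z.2 * (ENNReal.ofReal (etaStar η ((‖z.2.2‖ ^ 2 + z.2.1) / z.1) ^ q)
        / ENNReal.ofReal z.1)) := by
    have h1 : Measurable (fun z : ℝ × (ℝ × Ed d) =>
        etaStar η ((‖z.2.2‖ ^ 2 + z.2.1) / z.1)) := hmeas.comp (by fun_prop)
    exact (hw.comp measurable_snd).mul
      ((h1.pow_const q).ennreal_ofReal.div (by fun_prop))
  have hyr : ∀ r ∈ Ioo (0 : ℝ) R, y r / ENNReal.ofReal r =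
      ∫⁻ p in Ioo 0 T ×ˢ (univ : Set (Ed d)),
        w p * (ENNReal.ofReal (etaStar η ((‖p.2‖ ^ 2 + p.1) / r) ^ q) / ENNReal.ofReal r) := by
    intro r hr
    have hinv : (ENNReal.ofReal r)⁻¹ ≠ ∞ :=
      ENNReal.inv_ne_top.mpr (ENNReal.ofReal_pos.mpr hr.1).ne'
    rw [hy, div_eq_mul_inv, ← lintegral_mul_const' _ _ hinv]
    simp only [div_eq_mul_inv, mul_assoc]
  rw [hY, setLIntegral_congr_fun measurableSet_Ioo hyr,
    lintegral_lintegral_swap hF.aemeasurable, ← lintegral_const_mul' _ _ ENNReal.ofReal_ne_top]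
  refine setLIntegral_mono' (measurableSet_Ioo.prod MeasurableSet.univ) fun p hp => ?_
  have hρ : 0 < ‖p.2‖ ^ 2 + p.1 := add_pos_of_nonneg_of_pos (sq_nonneg _) hp.1.1
  have hm : Measurable (fun r : ℝ =>
      ENNReal.ofReal (etaStar η ((‖p.2‖ ^ 2 + p.1) / r) ^ q) / ENNReal.ofReal r) := by
    have h1 : Measurable (fun r : ℝ => etaStar η ((‖p.2‖ ^ 2 + p.1) / r)) :=
      hmeas.comp (by fun_prop)
    exact (h1.pow_const q).ennreal_ofReal.div (by fun_prop)
  rw [lintegral_const_mul _ hm, mul_left_comm]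
  gcongr
  exact lintegral_etaStar_le η q hq hanti hη0 _ R hρ
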